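/- The constant 1/4 in the interval-assignment lower bound is tight: for every ε > 0 there exist machine types with costs c_k = 2^k, strictly increasing capacities B_k ∈ ℤ≥1 satisfying 2^k/B_k ≥ 2^{k+1}/B_{k+1} for all k, a finite instance J of unit-length jobs, and a valid interval assignment 𝒜 for J such that OPT(J) < (1/4 + ε)·Σ_{(I,t_I,J_I)∈𝒜} 2^{t_I}. -/

import Mathlib

structure SchedInstance where
  jobs : Finset ℕ
  r : ℕ → ℤ
  d : ℕ → ℤ
  window : ∀ j ∈ jobs, r j ≤ d j

structure Batch where
  btype : ℕ
  time : ℤ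
  bjobs : Finset ℕ
deriving DecidableEq

def ValidSchedule (B : ℕ → ℕ) (P : SchedInstance) (S : Finset Batch) : Prop :=
  (∀ X ∈ S, X.bjobs.card ≤ B X.btype) ∧
  (∀ X ∈ S, ∀ j ∈ X.bjobs, j ∈ P.jobs ∧ P.r j ≤ X.time ∧ X.time ≤ P.d j) ∧
  (∀ X ∈ S, ∀ Y ∈ S, X ≠ Y → Disjoint X.bjobs Y.bjobs) ∧
  (∀ j ∈ P.jobs, ∃ X ∈ S, j ∈ X.bjobs)

noncomputable def schedCost (c : ℕ → ℝ) (S : Finset Batch) : ℝ :=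
  ∑ X ∈ S, c X.btype

noncomputable def OPT (c : ℕ → ℝ) (B : ℕ → ℕ) (P : SchedInstance) : ℝ :=
  sInf {x : ℝ | ∃ S : Finset Batch, ValidSchedule B P S ∧ schedCost c S = x}

structure IAItem where
  lo : ℤ
  hi : ℤ
  itype : ℕ
  ijobs : Finset ℕ
deriving DecidableEq

def ValidAssignment (B : ℕ → ℕ) (P : SchedInstance) (A : Finset IAItem) : Prop :=
  (∀ e ∈ A, if e.itype = 0 then e.ijobs.card = 1 else e.ijobs.card = B (e.itype - 1)) ∧
  (∀ e ∈ A, ∀ j ∈ e.ijobs, j ∈ P.jobs ∧ e.lo ≤ P.r j ∧ P.d j ≤ e.hi) ∧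
  (∀ e ∈ A, ∀ e' ∈ A, e ≠ e' → e.itype = e'.itype →
      Set.Icc e.lo e.hi ∩ Set.Icc e'.lo e'.hi = ∅) ∧
  (∀ e ∈ A, ∀ e' ∈ A, e ≠ e' → Disjoint e.ijobs e'.ijobs)

namespace TightInstance

/-- Capacities `2 ^ j` below type `n` and `2 ^ j * 2 ^ n` from type `n` on. -/
def capacity (n j : ℕ) : ℕ := 2 ^ j * (if j < n then 1 else 2 ^ n)

/-- The number of jobs started at each of the times `0, …, 2 ^ n`. -/
def blockSize (n : ℕ) : ℕ := 2 ^ n * 2 ^ n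

/-- The rigid jobs: the first `2 ^ n` jobs of each of the blocks `0, …, 2 ^ n - 1`. -/
def rigidJobs (n : ℕ) : Finset ℕ :=
  (Finset.range (2 ^ n) ×ˢ Finset.range (2 ^ n)).image fun p => p.1 * blockSize n + p.2

/-- Rigid jobs must run at the time given by their block, all others at any time
in `[0, 2 ^ n]`. -/
def inst (n : ℕ) : SchedInstance where
  jobs := Finset.range ((2 ^ n + 1) * blockSize n)
  r j := if j ∈ rigidJobs n then ((j / blockSize n : ℕ) : ℤ) else 0
  d j := if j ∈ rigidJobs n then ((j / blockSize n : ℕ) : ℤ) else 2 ^ n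
  window j _ := by split_ifs <;> simp

/-- The batch of type `n` running block `i` at time `i`. -/
def blockBatch (n i : ℕ) : Batch :=
  ⟨n, i, Finset.Ico (i * blockSize n) (i * blockSize n + blockSize n)⟩

def schedule (n : ℕ) : Finset Batch := (Finset.range (2 ^ n + 1)).image (blockBatch n)

/-- The interval `{i}` of type `t`, holding rigid jobs of block `i`. -/
def pointItem (n : ℕ) (p : ℕ × ℕ) : IAItem :=
  ⟨p.1, p.1, p.2, Finset.Ico (p.1 * blockSize n + 2 ^ p.2 / 2) (p.1 * blockSize n + 2 ^ p.2)⟩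

/-- The interval `[0, 2 ^ n]`, holding all jobs that are not rigid. -/
def longItem (n : ℕ) : IAItem := ⟨0, 2 ^ n, 2 * n + 1, (inst n).jobs \ rigidJobs n⟩

def pointItems (n : ℕ) : Finset IAItem :=
  (Finset.range (2 ^ n) ×ˢ Finset.range (n + 1)).image (pointItem n)

def assignment (n : ℕ) : Finset IAItem := insert (longItem n) (pointItems n)

lemma two_pow_le_blockSize (n : ℕ) : 2 ^ n ≤ blockSize n :=
  Nat.le_mul_of_pos_left _ (by positivity)

lemma blockSize_pos (n : ℕ) : 0 < blockSize n := by unfold blockSize; positivity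

lemma block_div {n i j : ℕ} (h₁ : i * blockSize n ≤ j) (h₂ : j < i * blockSize n + blockSize n) :
    j / blockSize n = i := by
  rw [Nat.div_eq_iff (blockSize_pos n)]
  have := blockSize_pos n
  constructor <;> omega

lemma capacity_pos (n j : ℕ) : 1 ≤ capacity n j := by
  unfold capacity
  split_ifs <;> exact Nat.one_le_iff_ne_zero.2 (by positivity)

lemma factor_mono (n j : ℕ) :
    (if j < n then 1 else 2 ^ n) ≤ (if j + 1 < n then 1 else 2 ^ n : ℕ) := by
  have := Nat.one_le_two_pow (n := n)
  split_ifs <;> omega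

lemma two_mul_capacity_le (n j : ℕ) : 2 * capacity n j ≤ capacity n (j + 1) := by
  unfold capacity
  calc 2 * (2 ^ j * (if j < n then 1 else 2 ^ n))
      = 2 ^ (j + 1) * (if j < n then 1 else 2 ^ n) := by ring
    _ ≤ _ := Nat.mul_le_mul_left _ (factor_mono n j)

lemma capacity_strictMono (n : ℕ) : StrictMono (capacity n) :=
  strictMono_nat_of_lt_succ fun j => by
    have := two_mul_capacity_le n j
    have := capacity_pos n j
    omega

lemma cost_div_capacity_antitone (n j : ℕ) :
    (2 : ℝ) ^ (j + 1) / (capacity n (j + 1) : ℝ) ≤ (2 : ℝ) ^ j / (capacity n j : ℝ) := by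
  have h₀ : (0 : ℝ) < capacity n j := by exact_mod_cast capacity_pos n j
  have h₁ : (0 : ℝ) < capacity n (j + 1) := by exact_mod_cast capacity_pos n (j + 1)
  have h₂ : (2 : ℝ) * capacity n j ≤ capacity n (j + 1) := by
    exact_mod_cast two_mul_capacity_le n j
  rw [div_le_div_iff₀ h₁ h₀, pow_succ, mul_assoc]
  gcongr

lemma capacity_of_lt {n j : ℕ} (h : j < n) : capacity n j = 2 ^ j := by simp [capacity, h]

lemma capacity_of_le {n j : ℕ} (h : n ≤ j) : capacity n j = 2 ^ j * 2 ^ n := by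
  simp [capacity, h.not_gt]

lemma rigidJobs_subset (n : ℕ) : rigidJobs n ⊆ (inst n).jobs := by
  intro j hj
  simp only [rigidJobs, Finset.mem_image, Finset.mem_product, Finset.mem_range] at hj
  obtain ⟨⟨i, o⟩, ⟨hi, ho⟩, rfl⟩ := hj
  simp only [inst, Finset.mem_range]
  have := two_pow_le_blockSize n
  have : i * blockSize n ≤ 2 ^ n * blockSize n := Nat.mul_le_mul_right _ hi.le
  simp only at hi ho
  rw [add_mul]
  omega

lemma card_rigidJobs (n : ℕ) : (rigidJobs n).card = blockSize n := by
  rw [rigidJobs, Finset.card_image_of_injOn, Finset.card_product, Finset.card_range, blockSize]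
  rintro ⟨i, o⟩ h ⟨i', o'⟩ h' heq
  simp only [Finset.coe_product, Finset.coe_range, Set.mem_prod, Set.mem_Iio] at h h' heq
  have := two_pow_le_blockSize n
  have hi : i = i' := by
    rw [← block_div (n := n) (i := i) (j := i * blockSize n + o) (by omega) (by omega), heq]
    exact block_div (by omega) (by omega)
  subst hi
  simp at heq
  simp [heq]

lemma pointItem_jobs_rigid {n : ℕ} {p : ℕ × ℕ} (h₁ : p.1 < 2 ^ n) (h₂ : p.2 < n + 1) {j : ℕ}
    (hj : j ∈ (pointItem n p).ijobs) : j ∈ rigidJobs n ∧ j / blockSize n = p.1 := by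
  simp only [pointItem, Finset.mem_Ico] at hj
  have h₃ : 2 ^ p.2 ≤ 2 ^ n := Nat.pow_le_pow_right (by norm_num) (by omega)
  have := two_pow_le_blockSize n
  refine ⟨?_, block_div (by omega) (by omega)⟩
  simp only [rigidJobs, Finset.mem_image, Finset.mem_product, Finset.mem_range]
  exact ⟨(p.1, j - p.1 * blockSize n), ⟨h₁, by simp only; omega⟩, by simp only; omega⟩

lemma pointItem_injective (n : ℕ) : Function.Injective (pointItem n) := by
  rintro ⟨i, t⟩ ⟨i', t'⟩ h
  simp only [pointItem, IAItem.mk.injEq] at h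
  simp only [Prod.mk.injEq]
  exact ⟨by exact_mod_cast h.1, h.2.2.1⟩

lemma mem_pointItems {n : ℕ} {e : IAItem} :
    e ∈ pointItems n ↔ ∃ p : ℕ × ℕ, (p.1 < 2 ^ n ∧ p.2 < n + 1) ∧ pointItem n p = e := by
  simp [pointItems]

lemma longItem_notMem (n : ℕ) : longItem n ∉ pointItems n := by
  rw [mem_pointItems]
  rintro ⟨p, ⟨-, h₂⟩, h⟩
  have := congrArg IAItem.itype h
  simp only [pointItem, longItem] at this
  omega

lemma card_longItem (n : ℕ) : (longItem n).ijobs.card = capacity n (2 * n) := by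
  rw [longItem, Finset.card_sdiff_of_subset (rigidJobs_subset n), card_rigidJobs,
    capacity_of_le (by omega)]
  simp only [inst, Finset.card_range]
  rw [add_mul, one_mul, Nat.add_sub_cancel, blockSize]
  ring

lemma disjoint_pointItems_of_lt {n i t t' : ℕ} (h : t < t') :
    Disjoint (pointItem n (i, t)).ijobs (pointItem n (i, t')).ijobs := by
  have h₁ : 2 ^ t ≤ 2 ^ t' / 2 := by
    rw [Nat.le_div_iff_mul_le (by norm_num), ← pow_succ]
    exact Nat.pow_le_pow_right (by norm_num) h
  rw [Finset.disjoint_left]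
  intro j hj hj'
  simp only [pointItem, Finset.mem_Ico] at hj hj'
  omega

lemma disjoint_long_point {n : ℕ} {e : IAItem} (he : e ∈ pointItems n) :
    Disjoint (longItem n).ijobs e.ijobs := by
  obtain ⟨p, ⟨h₁, h₂⟩, rfl⟩ := mem_pointItems.1 he
  rw [Finset.disjoint_left]
  intro j hj hj'
  exact (Finset.mem_sdiff.1 hj).2 (pointItem_jobs_rigid h₁ h₂ hj').1

lemma validAssignment (n : ℕ) : ValidAssignment (capacity n) (inst n) (assignment n) := by
  refine ⟨?_, ?_, ?_, ?_⟩
  · intro e he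
    rcases Finset.mem_insert.1 he with rfl | he
    · rw [card_longItem]
      simp [longItem]
    · obtain ⟨⟨i, t⟩, ⟨-, h₂⟩, rfl⟩ := mem_pointItems.1 he
      rcases t with _ | t
      · simp [pointItem]
      · simp only [pointItem, Nat.card_Ico]
        rw [if_neg (by omega), Nat.add_sub_cancel, capacity_of_lt (by simpa using h₂), pow_succ]
        omega
  · intro e he j hj
    rcases Finset.mem_insert.1 he with rfl | he
    · obtain ⟨hj, hj'⟩ := Finset.mem_sdiff.1 hj
      exact ⟨hj, by simp [longItem, inst, hj'], by simp [longItem, inst, hj']⟩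
    · obtain ⟨p, ⟨h₁, h₂⟩, rfl⟩ := mem_pointItems.1 he
      obtain ⟨hr, hd⟩ := pointItem_jobs_rigid h₁ h₂ hj
      refine ⟨rigidJobs_subset n hr, ?_, ?_⟩ <;> simp only [inst, if_pos hr, hd] <;> simp [pointItem]
  · intro e he e' he' hne ht
    rcases Finset.mem_insert.1 he with rfl | he <;> rcases Finset.mem_insert.1 he' with rfl | he'
    · exact absurd rfl hne
    · obtain ⟨p, ⟨-, h₂⟩, rfl⟩ := mem_pointItems.1 he'
      simp only [longItem, pointItem] at ht
      omega
    · obtain ⟨p, ⟨-, h₂⟩, rfl⟩ := mem_pointItems.1 he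
      simp only [longItem, pointItem] at ht
      omega
    · obtain ⟨⟨i, t⟩, -, rfl⟩ := mem_pointItems.1 he
      obtain ⟨⟨i', t'⟩, -, rfl⟩ := mem_pointItems.1 he'
      simp only [pointItem] at ht
      subst ht
      have hi : i ≠ i' := fun h => hne (by rw [h])
      simp only [pointItem, Set.Icc_self]
      rw [Set.singleton_inter_eq_empty]
      simpa using hi
  · intro e he e' he' hne
    rcases Finset.mem_insert.1 he with rfl | he <;> rcases Finset.mem_insert.1 he' with rfl | he'
    · exact absurd rfl hne
    · exact disjoint_long_point he'
    · exact (disjoint_long_point he).symm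
    · obtain ⟨⟨i, t⟩, ⟨h₁, h₂⟩, rfl⟩ := mem_pointItems.1 he
      obtain ⟨⟨i', t'⟩, ⟨h₁', h₂'⟩, rfl⟩ := mem_pointItems.1 he'
      by_cases hi : i = i'
      · subst hi
        rcases lt_trichotomy t t' with h | rfl | h
        · exact disjoint_pointItems_of_lt h
        · exact absurd rfl hne
        · exact (disjoint_pointItems_of_lt h).symm
      · rw [Finset.disjoint_left]
        intro j hj hj'
        exact hi ((pointItem_jobs_rigid h₁ h₂ hj).2.symm.trans (pointItem_jobs_rigid h₁' h₂' hj').2)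

lemma mem_blockBatch {n i j : ℕ} : j ∈ (blockBatch n i).bjobs ↔ j / blockSize n = i := by
  simp only [blockBatch, Finset.mem_Ico]
  refine ⟨fun h => block_div h.1 h.2, ?_⟩
  rintro rfl
  have h₁ := Nat.div_add_mod' j (blockSize n)
  have h₂ := Nat.mod_lt j (blockSize_pos n)
  omega

lemma validSchedule (n : ℕ) : ValidSchedule (capacity n) (inst n) (schedule n) := by
  simp only [ValidSchedule, schedule, Finset.forall_mem_image, Finset.exists_mem_image,
    mem_blockBatch]
  refine ⟨?_, ?_, ?_, ?_⟩
  · intro i _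
    simp [blockBatch, capacity_of_le le_rfl, blockSize]
  · rintro i hi j rfl
    rw [Finset.mem_range] at hi
    refine ⟨?_, ?_⟩
    · simpa [inst] using (Nat.div_lt_iff_lt_mul (blockSize_pos n)).1 hi
    · simp only [inst, blockBatch]
      split_ifs
      · simp
      · exact ⟨by positivity, by exact_mod_cast Nat.lt_succ_iff.1 hi⟩
  · intro i _ i' _ hne
    rw [Finset.disjoint_left]
    intro j hj hj'
    rw [mem_blockBatch] at hj hj'
    exact hne (by rw [← hj, ← hj'])
  · intro j hj
    exact ⟨j / blockSize n, Finset.mem_range.2 ((Nat.div_lt_iff_lt_mul (blockSize_pos n)).2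
      (by simpa [inst] using hj)), rfl⟩

lemma opt_le (n : ℕ) : OPT (fun k => (2 : ℝ) ^ k) (capacity n) (inst n) ≤ (2 ^ n + 1) * 2 ^ n := by
  have hinj : Function.Injective (blockBatch n) := fun i i' h => by
    simpa [blockBatch] using congrArg Batch.time h
  refine csInf_le ⟨0, ?_⟩ ⟨schedule n, validSchedule n, ?_⟩
  · rintro x ⟨S, -, rfl⟩
    exact Finset.sum_nonneg fun X _ => by positivity
  · rw [schedCost, schedule, Finset.sum_image hinj.injOn]
    simp [blockBatch]

lemma sum_assignment (n : ℕ) :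
    ∑ e ∈ assignment n, (2 : ℝ) ^ e.itype = 2 ^ n * (4 * 2 ^ n - 1) := by
  rw [assignment, Finset.sum_insert (longItem_notMem n), pointItems,
    Finset.sum_image (pointItem_injective n).injOn, Finset.sum_product]
  simp only [pointItem, longItem, Finset.sum_const, Finset.card_range, nsmul_eq_mul]
  rw [geom_sum_eq (by norm_num)]
  push_cast
  ring

end TightInstance

/-- the constant 1/4 in the interval-assignment lower bound is tight:
for every ε > 0 there are machine types with costs `2^k`, strictly increasing
capacities `B k ≥ 1` with non-increasing cost-per-job, an instance `J` and a valid
interval assignment `𝒜` with `OPT(J) < (1/4 + ε) · ∑_{(I,t_I,J_I) ∈ 𝒜} 2^{t_I}`. -/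
theorem lower_bound_constant_tight :
    ∀ ε : ℝ, 0 < ε →
      ∃ B : ℕ → ℕ, (∀ k, 1 ≤ B k) ∧ StrictMono B ∧
        (∀ k, (2 : ℝ) ^ (k + 1) / (B (k + 1) : ℝ) ≤ (2 : ℝ) ^ k / (B k : ℝ)) ∧
        ∃ (P : SchedInstance) (A : Finset IAItem),
          ValidAssignment B P A ∧
          OPT (fun k => (2 : ℝ) ^ k) B P
            < (1 / 4 + ε) * ∑ e ∈ A, (2 : ℝ) ^ e.itype := by
  intro ε hε
  obtain ⟨n, hn⟩ := pow_unbounded_of_one_lt (1 / ε) (one_lt_two : (1 : ℝ) < 2)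
  refine ⟨TightInstance.capacity n, TightInstance.capacity_pos n,
    TightInstance.capacity_strictMono n, TightInstance.cost_div_capacity_antitone n,
    TightInstance.inst n, TightInstance.assignment n, TightInstance.validAssignment n,
    (TightInstance.opt_le n).trans_lt ?_⟩
  rw [TightInstance.sum_assignment]
  rw [div_lt_iff₀ hε] at hn
  have h₁ : (1 : ℝ) ≤ 2 ^ n := one_le_pow₀ one_le_two
  set K : ℝ := 2 ^ n
  have h₂ : K + 1 < (1 / 4 + ε) * (4 * K - 1) := by nlinarith
  calc (K + 1) * K < (1 / 4 + ε) * (4 * K - 1) * K :=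
        mul_lt_mul_of_pos_right h₂ (by linarith)
    _ = (1 / 4 + ε) * (K * (4 * K - 1)) := by ring
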